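/- Let N ≥ 1, M ≥ 1, and K be natural numbers with 1 ≤ K ≤ N. If (N choose K)² · M · exp(−K²/(3M)) < 1 (as real numbers), then there exists a function f : Fin N × Fin N → Fin M such that for all sets B1, B2 ⊆ Fin N with |B1| = |B2| = K and every a ∈ Fin M, one has M · |{(u,v) ∈ B1 × B2 : f(u,v) = a}| ≤ 2·K². -/

import Mathlib

/-!
Color the cells independently and uniformly at random with `M` colors. The number `X` of cells of
a set `B` that receive a given color is a sum of `#B` independent indicators and has mean
`μ = #B / M`, so its moment generating function is at most `exp ((exp s - 1) * μ)`. Markov's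
inequality at `s = log 2` bounds the probability of `X > 2 * μ` by
`exp (-(2 * log 2 - 1) * μ) ≤ exp (-μ / 3)`, and a union bound over all rectangles and colors
leaves a coloring without any violation. Probabilities are expressed by counting colorings.
-/

open Finset

theorem exists_forall_notMem_of_sum_card_lt {ι Ω : Type*} [Fintype Ω] (s : Finset ι)
    (bad : ι → Finset Ω) (h : ∑ i ∈ s, #(bad i) < Fintype.card Ω) :
    ∃ ω, ∀ i ∈ s, ω ∉ bad i := by
  classical
  obtain ⟨ω, -, hω⟩ := exists_mem_notMem_of_card_lt_card (card_biUnion_le.trans_lt h)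
  exact ⟨ω, fun i hi hbad => hω (mem_biUnion.mpr ⟨i, hi, hbad⟩)⟩

section Chernoff

variable {α C : Type*} [Fintype α] [DecidableEq α] [Fintype C] [DecidableEq C]

theorem sum_pow_card_filter_eq {R : Type*} [CommRing R] (B : Finset α) (a : C) (x : R) :
    ∑ f : α → C, x ^ #{i ∈ B | f i = a} =
      (Fintype.card C - 1 + x) ^ #B * (Fintype.card C : R) ^ #Bᶜ := by
  have sum_weight (i : α) : ∑ c : C, (if i ∈ B ∧ c = a then x else 1) =
      if i ∈ B then Fintype.card C - 1 + x else (Fintype.card C : R) := by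
    by_cases hi : i ∈ B
    · simp [hi, sum_ite, filter_eq', filter_ne', card_erase_of_mem,
        Nat.cast_pred (Fintype.card_pos_iff.mpr ⟨a⟩), add_comm]
    · simp [hi]
  calc ∑ f : α → C, x ^ #{i ∈ B | f i = a}
    _ = ∑ f : α → C, ∏ i, (if i ∈ B ∧ f i = a then x else 1) := by
      simp [prod_ite, filter_and, inter_filter]
    _ = ∏ i, ∑ c : C, (if i ∈ B ∧ c = a then x else 1) := by
      rw [Fintype.prod_sum]
    _ = (Fintype.card C - 1 + x) ^ #B * (Fintype.card C : R) ^ #Bᶜ := by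
      simp [sum_weight, prod_ite, filter_notMem_eq_sdiff, compl_eq_univ_sdiff]

theorem sum_exp_mul_card_filter_le (B : Finset α) (a : C) (s : ℝ) :
    ∑ f : α → C, Real.exp (s * #{i ∈ B | f i = a}) ≤
      (Fintype.card C : ℝ) ^ Fintype.card α *
        Real.exp ((Real.exp s - 1) * (#B / Fintype.card C)) := by
  set M := (Fintype.card C : ℝ)
  have hM : 1 ≤ M := Nat.one_le_cast.mpr (Fintype.card_pos_iff.mpr ⟨a⟩)
  have base_nonneg : 0 ≤ M - 1 + Real.exp s := by linarith [Real.exp_pos s]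
  have base_le : M - 1 + Real.exp s ≤ M * Real.exp ((Real.exp s - 1) / M) := calc
    M - 1 + Real.exp s = M * ((Real.exp s - 1) / M + 1) := by field_simp; ring
    _ ≤ M * Real.exp ((Real.exp s - 1) / M) := by gcongr; exact Real.add_one_le_exp _
  calc ∑ f : α → C, Real.exp (s * #{i ∈ B | f i = a})
    _ = (M - 1 + Real.exp s) ^ #B * M ^ #Bᶜ := by
      simp only [← sum_pow_card_filter_eq B a (Real.exp s), M, ← Real.exp_nat_mul, mul_comm s]
    _ ≤ (M * Real.exp ((Real.exp s - 1) / M)) ^ #B * M ^ #Bᶜ :=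
      mul_le_mul_of_nonneg_right (pow_le_pow_left₀ base_nonneg base_le _) (by positivity)
    _ = M ^ Fintype.card α * Real.exp ((Real.exp s - 1) * (#B / M)) := by
      rw [← card_add_card_compl B, mul_pow, pow_add, ← Real.exp_nat_mul]
      ring_nf

theorem card_le_card_filter_le_exp (B : Finset α) (a : C) {s : ℝ} (hs : 0 ≤ s) (t : ℝ) :
    (#{f : α → C | t ≤ #{i ∈ B | f i = a}} : ℝ) ≤
      (Fintype.card C : ℝ) ^ Fintype.card α *
        Real.exp ((Real.exp s - 1) * (#B / Fintype.card C) - s * t) := by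
  have markov : #{f : α → C | t ≤ #{i ∈ B | f i = a}} * Real.exp (s * t) ≤
      ∑ f : α → C, Real.exp (s * #{i ∈ B | f i = a}) := calc
    _ ≤ ∑ f : α → C with t ≤ #{i ∈ B | f i = a}, Real.exp (s * #{i ∈ B | f i = a}) := by
      rw [← nsmul_eq_mul]
      refine card_nsmul_le_sum _ _ _ fun f hf => ?_
      have : t ≤ #{i ∈ B | f i = a} := (mem_filter.mp hf).2
      gcongr
    _ ≤ _ := sum_le_sum_of_subset_of_nonneg (filter_subset _ _) fun _ _ _ => (Real.exp_pos _).le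
  rw [Real.exp_sub, ← mul_div_assoc, le_div_iff₀ (Real.exp_pos _)]
  exact markov.trans (sum_exp_mul_card_filter_le B a s)

theorem card_two_mul_card_lt_mul_card_filter_le_exp (B : Finset α) (a : C) :
    (#{f : α → C | 2 * (#B : ℝ) < Fintype.card C * #{i ∈ B | f i = a}} : ℝ) ≤
      (Fintype.card C : ℝ) ^ Fintype.card α * Real.exp (-#B / (3 * Fintype.card C)) := by
  set M := (Fintype.card C : ℝ)
  have hM : 0 < M := Nat.cast_pos.mpr (Fintype.card_pos_iff.mpr ⟨a⟩)
  set μ : ℝ := #B / M with hμ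
  have μ_nonneg : 0 ≤ μ := by positivity
  have exponent_le : (Real.exp (Real.log 2) - 1) * μ - Real.log 2 * (2 * μ) ≤ -#B / (3 * M) := calc
    _ = -(2 * Real.log 2 - 1) * μ := by rw [Real.exp_log two_pos]; ring
    _ ≤ -(1 / 3) * μ := by gcongr; linarith [Real.log_two_gt_d9]
    _ = -#B / (3 * M) := by rw [hμ]; ring
  calc (#{f : α → C | 2 * (#B : ℝ) < M * #{i ∈ B | f i = a}} : ℝ)
    _ ≤ #{f : α → C | 2 * μ ≤ #{i ∈ B | f i = a}} := by
      gcongr with f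
      intro hf
      rw [hμ, ← mul_div_assoc, div_le_iff₀' hM]
      exact hf.le
    _ ≤ M ^ Fintype.card α *
          Real.exp ((Real.exp (Real.log 2) - 1) * μ - Real.log 2 * (2 * μ)) :=
      card_le_card_filter_le_exp B a (Real.log_nonneg one_le_two) (2 * μ)
    _ ≤ M ^ Fintype.card α * Real.exp (-#B / (3 * M)) := by gcongr

end Chernoff

section Coloring

variable {α β C ι : Type*} [Fintype C] [DecidableEq C] [Nonempty C]

theorem exists_coloring_of_sum_exp_lt_one [Finite α] (s : Finset ι) (B : ι → Finset α)
    (h : ∑ i ∈ s, Fintype.card C * Real.exp (-#(B i) / (3 * Fintype.card C)) < 1) :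
    ∃ f : α → C, ∀ i ∈ s, ∀ a : C,
      (Fintype.card C : ℝ) * #{x ∈ B i | f x = a} ≤ 2 * #(B i) := by
  classical
  have := Fintype.ofFinite α
  let bad (p : ι × C) : Finset (α → C) :=
    {f | 2 * (#(B p.1) : ℝ) < Fintype.card C * #{x ∈ B p.1 | f x = p.2}}
  have sum_card_bad_lt : (∑ p ∈ s ×ˢ univ, #(bad p) : ℝ) < Fintype.card (α → C) := calc
    _ ≤ ∑ p ∈ s ×ˢ (univ : Finset C), (Fintype.card C : ℝ) ^ Fintype.card α *
          Real.exp (-#(B p.1) / (3 * Fintype.card C)) :=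
      sum_le_sum fun p _ => card_two_mul_card_lt_mul_card_filter_le_exp (B p.1) p.2
    _ = (Fintype.card C : ℝ) ^ Fintype.card α *
          ∑ i ∈ s, Fintype.card C * Real.exp (-#(B i) / (3 * Fintype.card C)) := by
      simp [sum_product, mul_sum, mul_left_comm]
    _ < (Fintype.card C : ℝ) ^ Fintype.card α := mul_lt_of_lt_one_right (by positivity) h
    _ = Fintype.card (α → C) := by simp
  obtain ⟨f, hf⟩ := exists_forall_notMem_of_sum_card_lt (s ×ˢ univ) bad
    (by exact_mod_cast sum_card_bad_lt)
  exact ⟨f, fun i hi a => by simpa [bad] using hf (i, a) (by simpa using hi)⟩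

theorem exists_coloring_of_union_bound_general [Fintype α] [Fintype β] (K L : ℕ)
    (hbound : ((Fintype.card α).choose K : ℝ) * (Fintype.card β).choose L * Fintype.card C *
      Real.exp (-(K * L) / (3 * Fintype.card C)) < 1) :
    ∃ f : α × β → C, ∀ (B₁ : Finset α) (B₂ : Finset β), #B₁ = K → #B₂ = L → ∀ a : C,
      (Fintype.card C : ℝ) * #{uv ∈ B₁ ×ˢ B₂ | f uv = a} ≤ 2 * (K * L) := by
  let rectangles : Finset (Finset α × Finset β) := powersetCard K univ ×ˢ powersetCard L univ
  have sum_lt_one : ∑ p ∈ rectangles,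
      Fintype.card C * Real.exp (-#(p.1 ×ˢ p.2) / (3 * Fintype.card C)) < 1 := calc
    _ = ∑ _p ∈ rectangles, Fintype.card C * Real.exp (-(K * L) / (3 * Fintype.card C)) := by
      refine sum_congr rfl fun p hp => ?_
      obtain ⟨h₁, h₂⟩ : #p.1 = K ∧ #p.2 = L := by simpa [rectangles] using hp
      simp [h₁, h₂]
    _ = _ := by simp [rectangles, mul_assoc]
    _ < 1 := hbound
  obtain ⟨f, hf⟩ := exists_coloring_of_sum_exp_lt_one rectangles (fun p => p.1 ×ˢ p.2) sum_lt_one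
  refine ⟨f, fun B₁ B₂ h₁ h₂ a => ?_⟩
  simpa [h₁, h₂] using hf (B₁, B₂) (by simp [rectangles, h₁, h₂]) a

end Coloring

/-- Union-bound step of the probabilistic construction: if
`(N choose K)² · M · exp(−K²/(3M)) < 1`, then there is a coloring
`f : Fin N × Fin N → Fin M` such that in every `K × K` rectangle each color appears
at most `2K²/M` times. -/
theorem exists_coloring_of_union_bound (N M K : ℕ) (hN : 1 ≤ N) (hM : 1 ≤ M)
    (hK1 : 1 ≤ K) (hKN : K ≤ N)
    (hbound : ((N.choose K : ℝ)) ^ 2 * M * Real.exp (-((K : ℝ) ^ 2) / (3 * M)) < 1) :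
    ∃ f : Fin N × Fin N → Fin M,
      ∀ B1 B2 : Finset (Fin N), B1.card = K → B2.card = K →
        ∀ a : Fin M,
          (M : ℝ) * (((B1 ×ˢ B2).filter (fun uv => f uv = a)).card : ℝ) ≤
            2 * (K : ℝ) ^ 2 := by
  have : Nonempty (Fin M) := ⟨⟨0, hM⟩⟩
  simpa [sq] using exists_coloring_of_union_bound_general (α := Fin N) (β := Fin N) (C := Fin M)
    K K (by simpa [sq] using hbound)
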